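/- Let X ∈ ℝ^{n×p} have full row rank with n < p, let y ∈ ℝⁿ, and suppose 0 < α < 2/λ_max(XᵀX), where λ_max(XᵀX) is the largest eigenvalue of XᵀX. Then for every initial value β^{(0)} ∈ ℝᵖ, the gradient descent iterates β^{(k)} = β^{(k-1)} + α Xᵀ(y − X β^{(k-1)}) converge, with limit β^{(∞)} = Xᵀ(XXᵀ)^{-1} y + (I_p − Xᵀ(XXᵀ)^{-1} X) β^{(0)}. In particular, X β^{(∞)} = y. -/

import Mathlib

open Matrix Filter

/-!
If `b` solves the normal equations `XᴴX b = Xᴴy`, one gradient step multiplies the error `β - b`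
by `1 - α XᴴX`. The functional calculus turns `(1 - α XᴴX)ᵏ XᴴX` into the functions
`x ↦ (1 - αx)ᵏ x`, which by Dini's theorem tend to zero uniformly on the spectrum: a point `x ≠ 0`
is contracted because `0 < αx < 2`, and `x = 0` is killed by the last factor. So the iterates tend
to `b` as soon as the initial error lies in the row space of `X`, which is the range of `XᴴX`.
For `X` of full row rank, with right inverse `G = Xᴴ(XXᴴ)⁻¹`, the solution `b = Gy + (1 - GX)β₀` of
`Xb = y` has this property, as `β₀ - b = G(Xβ₀ - y)`.
-/

section FunctionalCalculus

theorem tendstoUniformlyOn_one_sub_mul_pow_mul {s : Set ℝ} (hs : IsCompact s) {α : ℝ}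
    (hα : ∀ x ∈ s, x = 0 ∨ |1 - α * x| < 1) :
    TendstoUniformlyOn (fun (k : ℕ) x => (1 - α * x) ^ k * x) (fun _ => 0) atTop s := by
  have habs : TendstoUniformlyOn (fun (k : ℕ) x => |1 - α * x| ^ k * |x|) (fun _ => 0) atTop s := by
    refine Antitone.tendstoUniformlyOn_of_forall_tendsto hs (fun k => by fun_prop)
      (fun x hx => ?_) continuousOn_const fun x hx => ?_
    all_goals rcases hα x hx with rfl | hlt
    · simp [antitone_const]
    · exact (pow_right_anti₀ (abs_nonneg _) hlt.le).mul_const (abs_nonneg x)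
    · simp
    · simpa using (tendsto_pow_atTop_nhds_zero_of_lt_one (abs_nonneg _) hlt).mul_const |x|
  simpa [Metric.tendstoUniformlyOn_iff, Real.dist_eq, abs_mul, abs_pow] using habs

theorem tendsto_one_sub_smul_pow_mul {A : Type*} {p : A → Prop} [Ring A] [StarRing A]
    [TopologicalSpace A] [Algebra ℝ A] [ContinuousFunctionalCalculus ℝ A p] {a : A} (ha : p a)
    {α : ℝ} (hα : ∀ x ∈ spectrum ℝ a, x = 0 ∨ |1 - α * x| < 1) :
    Tendsto (fun k : ℕ => (1 - α • a) ^ k * a) atTop (nhds 0) := by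
  have hcfc (k : ℕ) : cfc (fun x : ℝ => (1 - α * x) ^ k * x) a = (1 - α • a) ^ k * a := by
    rw [cfc_mul .., cfc_pow .., cfc_sub .., cfc_const_one .., cfc_const_mul_id .., cfc_id' ..]
  simp only [← hcfc, ← cfc_const_zero ℝ a]
  exact tendsto_cfc_fun (tendstoUniformlyOn_one_sub_mul_pow_mul
      (ContinuousFunctionalCalculus.isCompact_spectrum a) hα)
    (.of_forall fun k => by fun_prop)

end FunctionalCalculus

section StepSize

theorem mul_lt_of_lt_div_of_mem_upperBounds {K : Type*} [Field K] [LinearOrder K]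
    [IsStrictOrderedRing K] {s : Set K} {M : K} (hM : M ∈ upperBounds s) (hM_nonneg : 0 ≤ M)
    {α c : K} (hα : 0 < α) (hαM : α < c / M) : ∀ x ∈ s, α * x < c := by
  intro x hx
  -- `M = 0` is excluded because `c / 0 = 0` would give `α < 0`.
  have hM_pos : 0 < M := hM_nonneg.lt_of_ne' fun h => by
    rw [h, div_zero] at hαM
    exact hα.not_gt hαM
  calc α * x ≤ α * M := by gcongr; exact hM hx
    _ < c := (lt_div_iff₀ hM_pos).1 hαM

open scoped ComplexOrder in
theorem spectrum_conjTranspose_mul_self_nonneg {m n 𝕜 : Type*} [Fintype m] [Fintype n]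
    [DecidableEq n] [RCLike 𝕜] (X : Matrix m n 𝕜) : ∀ x ∈ spectrum ℝ (Xᴴ * X), 0 ≤ x := by
  intro x hx
  have hpsd : (Xᴴ * X).PosSemidef := posSemidef_conjTranspose_mul_self X
  rw [hpsd.isHermitian.spectrum_real_eq_range_eigenvalues] at hx
  obtain ⟨i, rfl⟩ := hx
  exact hpsd.eigenvalues_nonneg i

end StepSize

section RightInverse

theorem isUnit_of_rank_eq_card {n K : Type*} [Fintype n] [DecidableEq n] [Field K]
    {M : Matrix n n K} (hM : M.rank = Fintype.card n) : IsUnit M := by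
  have hrange : LinearMap.range M.mulVecLin = ⊤ :=
    Submodule.eq_top_of_finrank_eq (hM.trans (Module.finrank_fintype_fun_eq_card K).symm)
  exact mulVec_surjective_iff_isUnit.1 (LinearMap.range_eq_top.1 hrange)

open scoped ComplexOrder in
theorem mul_conjTranspose_mul_inv_of_rank_eq_card {m n 𝕜 : Type*} [Fintype m] [Fintype n]
    [DecidableEq m] [RCLike 𝕜] {X : Matrix m n 𝕜} (hX : X.rank = Fintype.card m) :
    X * (Xᴴ * (X * Xᴴ)⁻¹) = 1 := by
  have hunit : IsUnit (X * Xᴴ) :=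
    isUnit_of_rank_eq_card ((rank_self_mul_conjTranspose X).trans hX)
  rw [← Matrix.mul_assoc, mul_nonsing_inv _ ((isUnit_iff_isUnit_det _).1 hunit)]

variable {m n R : Type*} [Fintype m] [Fintype n] [DecidableEq n] [Ring R]

theorem mulVec_add_one_sub_mul_mulVec [DecidableEq m] {X : Matrix m n R} {G : Matrix n m R}
    (hG : X * G = 1) (y : m → R) (β : n → R) : X *ᵥ (G *ᵥ y + (1 - G * X) *ᵥ β) = y := by
  have hker : X * (1 - G * X) = 0 := by
    rw [Matrix.mul_sub, Matrix.mul_one, ← Matrix.mul_assoc, hG, Matrix.one_mul, sub_self]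
  rw [mulVec_add, mulVec_mulVec, mulVec_mulVec, hG, hker, one_mulVec, zero_mulVec, add_zero]

theorem sub_mulVec_add_one_sub_mul_mulVec (X : Matrix m n R) (G : Matrix n m R) (y : m → R)
    (β : n → R) : β - (G *ᵥ y + (1 - G * X) *ᵥ β) = G *ᵥ (X *ᵥ β - y) := by
  rw [sub_mulVec, one_mulVec, mulVec_sub, mulVec_mulVec]
  abel

end RightInverse

section GradientStep

variable {m n 𝕜 : Type*} [Fintype m] [Fintype n] [RCLike 𝕜]

open scoped ComplexOrder in
theorem range_mulVecLin_conjTranspose_mul_self (X : Matrix m n 𝕜) :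
    LinearMap.range (Xᴴ * X).mulVecLin = LinearMap.range Xᴴ.mulVecLin := by
  apply Submodule.eq_of_le_of_finrank_eq
  · rw [mulVecLin_mul]
    exact LinearMap.range_comp_le_range _ _
  · exact (rank_conjTranspose_mul_self X).trans (rank_conjTranspose X).symm

/-- One step of gradient descent, with step size `α`, for the least squares objective
`b ↦ ‖y - X b‖² / 2`. -/
def gradientStep (α : ℝ) (X : Matrix m n 𝕜) (y : m → 𝕜) (b : n → 𝕜) : n → 𝕜 :=
  b + α • (Xᴴ *ᵥ (y - X *ᵥ b))

variable [DecidableEq n] {α : ℝ} {X : Matrix m n 𝕜} {y : m → 𝕜} {b : n → 𝕜}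

theorem gradientStep_sub (hb : (Xᴴ * X) *ᵥ b = Xᴴ *ᵥ y) (β : n → 𝕜) :
    gradientStep α X y β - b = (1 - α • (Xᴴ * X)) *ᵥ (β - b) := by
  have hgrad : Xᴴ *ᵥ (y - X *ᵥ β) = -((Xᴴ * X) *ᵥ (β - b)) := by
    rw [mulVec_sub, mulVec_sub, ← hb, mulVec_mulVec, neg_sub]
  rw [gradientStep, hgrad, sub_mulVec, one_mulVec, smul_mulVec]
  module

theorem iterate_gradientStep_sub (hb : (Xᴴ * X) *ᵥ b = Xᴴ *ᵥ y) (β : n → 𝕜) (k : ℕ) :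
    (gradientStep α X y)^[k] β - b = (1 - α • (Xᴴ * X)) ^ k *ᵥ (β - b) := by
  induction k with
  | zero => simp
  | succ k ih =>
    rw [Function.iterate_succ_apply', gradientStep_sub hb, ih, mulVec_mulVec, pow_succ']

theorem tendsto_one_sub_smul_conjTranspose_mul_self_pow_mul (hα₀ : 0 < α)
    (hα₁ : ∀ x ∈ spectrum ℝ (Xᴴ * X), α * x < 2) :
    Tendsto (fun k : ℕ => (1 - α • (Xᴴ * X)) ^ k * (Xᴴ * X)) atTop (nhds 0) := by
  refine tendsto_one_sub_smul_pow_mul (isHermitian_conjTranspose_mul_self X).isSelfAdjoint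
    fun x hx => ?_
  refine (spectrum_conjTranspose_mul_self_nonneg X x hx).eq_or_lt.imp Eq.symm fun hx_pos => ?_
  have hαx_pos : 0 < α * x := mul_pos hα₀ hx_pos
  exact abs_lt.2 ⟨by linarith [hα₁ x hx], by linarith⟩

theorem tendsto_iterate_gradientStep (hα₀ : 0 < α)
    (hα₁ : ∀ x ∈ spectrum ℝ (Xᴴ * X), α * x < 2) (hb : (Xᴴ * X) *ᵥ b = Xᴴ *ᵥ y) {β : n → 𝕜}
    (hβ : β - b ∈ LinearMap.range Xᴴ.mulVecLin) :
    Tendsto (fun k : ℕ => (gradientStep α X y)^[k] β) atTop (nhds b) := by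
  rw [← range_mulVecLin_conjTranspose_mul_self] at hβ
  obtain ⟨v, hv : (Xᴴ * X) *ᵥ v = β - b⟩ := hβ
  have hmulVec : Continuous fun M : Matrix n n 𝕜 => M *ᵥ v := by fun_prop
  rw [← tendsto_sub_nhds_zero_iff]
  simp only [iterate_gradientStep_sub hb, ← hv, mulVec_mulVec]
  simpa only [zero_mulVec, Function.comp_def] using
    (hmulVec.tendsto 0).comp (tendsto_one_sub_smul_conjTranspose_mul_self_pow_mul hα₀ hα₁)

end GradientStep

theorem gradient_descent_limit_general {m n 𝕜 : Type*} [Fintype m] [Fintype n] [DecidableEq m]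
    [DecidableEq n] [RCLike 𝕜] {X : Matrix m n 𝕜} (hX : X.rank = Fintype.card m) (y : m → 𝕜)
    {α : ℝ} (hα₀ : 0 < α) (hα₁ : ∀ x ∈ spectrum ℝ (Xᴴ * X), α * x < 2) (β0 : n → 𝕜) :
    Tendsto (fun k : ℕ => (gradientStep α X y)^[k] β0) atTop
        (nhds (Xᴴ *ᵥ ((X * Xᴴ)⁻¹ *ᵥ y) + (1 - Xᴴ * (X * Xᴴ)⁻¹ * X) *ᵥ β0)) ∧
      X *ᵥ (Xᴴ *ᵥ ((X * Xᴴ)⁻¹ *ᵥ y) + (1 - Xᴴ * (X * Xᴴ)⁻¹ * X) *ᵥ β0) = y := by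
  rw [mulVec_mulVec]
  have hinterp := mulVec_add_one_sub_mul_mulVec
    (mul_conjTranspose_mul_inv_of_rank_eq_card hX) y β0
  refine ⟨tendsto_iterate_gradientStep hα₀ hα₁ ?normal_equations ?row_space, hinterp⟩
  case normal_equations => rw [← mulVec_mulVec, hinterp]
  case row_space =>
    rw [sub_mulVec_add_one_sub_mul_mulVec, ← mulVec_mulVec]
    exact LinearMap.mem_range_self Xᴴ.mulVecLin _

/-- For a convergent step size `0 < α < 2/λ_max(XᵀX)`, the gradient
descent iterates converge to `β^{(∞)} = Xᵀ(XXᵀ)⁻¹y + (I_p − Xᵀ(XXᵀ)⁻¹X)β^{(0)}`, which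
interpolates: `X β^{(∞)} = y`. -/
theorem gradient_descent_limit
    {n p : ℕ} (hnp : n < p)
    (X : Matrix (Fin n) (Fin p) ℝ) (hX : X.rank = n)
    (y : Fin n → ℝ)
    (hherm : (Xᵀ * X).IsHermitian)
    (lammax : ℝ) (hlam : IsGreatest (Set.range hherm.eigenvalues) lammax)
    (α : ℝ) (hα₀ : 0 < α) (hα₁ : α < 2 / lammax) :
    ∀ β0 : Fin p → ℝ,
      Tendsto (fun k : ℕ =>
          (fun b : Fin p → ℝ => b + α • (Xᵀ *ᵥ (y - X *ᵥ b)))^[k] β0)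
        atTop
        (nhds (Xᵀ *ᵥ ((X * Xᵀ)⁻¹ *ᵥ y) +
          ((1 : Matrix (Fin p) (Fin p) ℝ) - Xᵀ * (X * Xᵀ)⁻¹ * X) *ᵥ β0)) ∧
      X *ᵥ (Xᵀ *ᵥ ((X * Xᵀ)⁻¹ *ᵥ y) +
          ((1 : Matrix (Fin p) (Fin p) ℝ) - Xᵀ * (X * Xᵀ)⁻¹ * X) *ᵥ β0) = y := by
  rw [← hherm.spectrum_real_eq_range_eigenvalues] at hlam
  exact gradient_descent_limit_general (hX.trans (Fintype.card_fin n).symm) y hα₀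
    (mul_lt_of_lt_div_of_mem_upperBounds hlam.2
      (spectrum_conjTranspose_mul_self_nonneg X lammax hlam.1) hα₀ hα₁)
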